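/- The series ∑_{k≥0} C(2k, k) / (2 · 4^k · (k+1) · (2k+1)) converges and its sum equals π/2 − 1, where C(2k, k) denotes the central binomial coefficient. -/

import Mathlib

open Real

/-!
Write `aₖ = C(2k, k) / 4ᵏ`. Since `aₖ - aₖ₊₁ = aₖ / (2k + 2)`, the `k`-th term of the series is
`aₖ / (2k + 1) - (aₖ - aₖ₊₁)`. The second part telescopes to `1`, and the first is the power series
of `arcsin`, obtained by integrating the binomial series of `(1 - x²)^(-1/2)`, at the boundary
point `1`. Summability of the first part follows by comparison with the telescoping series, so that
the `arcsin` series is uniformly convergent, hence continuous, on `[-1, 1]`.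
-/

open Filter Set Topology

/-- The ratio `C(2k, k) / 4ᵏ`, which is the `k`-th Taylor coefficient of `(1 - x)^(-1/2)` at `0`. -/
noncomputable def centralBinomRatio (k : ℕ) : ℝ := k.centralBinom / 4 ^ k

lemma centralBinomRatio_zero : centralBinomRatio 0 = 1 := by
  simp [centralBinomRatio]

lemma centralBinomRatio_pos (k : ℕ) : 0 < centralBinomRatio k :=
  div_pos (mod_cast k.centralBinom_pos) (by positivity)

lemma centralBinomRatio_succ (k : ℕ) :
    centralBinomRatio (k + 1) = (2 * k + 1) / (2 * k + 2) * centralBinomRatio k := by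
  have recurrence : ((k : ℝ) + 1) * (k + 1).centralBinom = 2 * (2 * k + 1) * k.centralBinom :=
    mod_cast k.succ_mul_centralBinom_succ
  rw [centralBinomRatio, centralBinomRatio, pow_succ]
  field_simp
  linear_combination 2 * recurrence

lemma centralBinomRatio_sub_succ (k : ℕ) :
    centralBinomRatio k - centralBinomRatio (k + 1) = centralBinomRatio k / (2 * k + 2) := by
  rw [centralBinomRatio_succ]
  field_simp
  ring

lemma centralBinomRatio_sq_le (k : ℕ) : centralBinomRatio k ^ 2 ≤ 1 / (2 * k + 1) := by
  induction k with
  | zero => simp [centralBinomRatio_zero]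
  | succ k ih =>
    calc centralBinomRatio (k + 1) ^ 2
        = ((2 * k + 1) / (2 * k + 2) : ℝ) ^ 2 * centralBinomRatio k ^ 2 := by
          rw [centralBinomRatio_succ, mul_pow]
      _ ≤ ((2 * k + 1) / (2 * k + 2) : ℝ) ^ 2 * (1 / (2 * k + 1)) := by gcongr
      _ = (2 * k + 1) / (2 * k + 2) ^ 2 := by field_simp
      _ ≤ 1 / (2 * (k + 1 : ℕ) + 1) := by
          rw [div_le_div_iff₀ (by positivity) (by positivity)]
          push_cast
          linarith

lemma tendsto_centralBinomRatio : Tendsto centralBinomRatio atTop (𝓝 0) := by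
  have odd_atTop : Tendsto (fun k : ℕ ↦ (2 * k + 1 : ℝ)) atTop atTop :=
    tendsto_atTop_add_const_right _ _ (tendsto_natCast_atTop_atTop.const_mul_atTop two_pos)
  have sq_tendsto : Tendsto (fun k ↦ centralBinomRatio k ^ 2) atTop (𝓝 0) :=
    squeeze_zero (fun k ↦ sq_nonneg _) centralBinomRatio_sq_le (odd_atTop.const_div_atTop 1)
  simpa [sqrt_sq (centralBinomRatio_pos _).le] using sq_tendsto.sqrt

lemma hasSum_centralBinomRatio_div_two_mul_add_two :
    HasSum (fun k : ℕ ↦ centralBinomRatio k / (2 * k + 2)) 1 := by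
  have nonneg (k : ℕ) : 0 ≤ centralBinomRatio k / (2 * k + 2) :=
    div_nonneg (centralBinomRatio_pos k).le (by positivity)
  rw [hasSum_iff_tendsto_nat_of_nonneg nonneg]
  simp only [← centralBinomRatio_sub_succ, Finset.sum_range_sub', centralBinomRatio_zero]
  simpa using tendsto_centralBinomRatio.const_sub 1

lemma summable_centralBinomRatio_div_two_mul_add_one :
    Summable fun k : ℕ ↦ centralBinomRatio k / (2 * k + 1) := by
  refine (hasSum_centralBinomRatio_div_two_mul_add_two.summable.mul_left 2).of_nonneg_of_le
    (fun k ↦ div_nonneg (centralBinomRatio_pos k).le (by positivity)) fun k ↦ ?_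
  have := centralBinomRatio_pos k
  rw [← mul_div_assoc, div_le_div_iff₀ (by positivity) (by positivity)]
  nlinarith

lemma multichoose_one_half (k : ℕ) : Ring.multichoose (1 / 2 : ℝ) k = centralBinomRatio k := by
  suffices h : (ascPochhammer ℝ k).eval (1 / 2) = k.factorial * centralBinomRatio k by
    have factorial_mul := Ring.factorial_nsmul_multichoose_eq_ascPochhammer (1 / 2 : ℝ) k
    rw [nsmul_eq_mul, Polynomial.ascPochhammer_smeval_eq_eval, h] at factorial_mul
    exact mul_left_cancel₀ (mod_cast k.factorial_ne_zero) factorial_mul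
  induction k with
  | zero => simp [centralBinomRatio_zero]
  | succ k ih =>
    rw [ascPochhammer_succ_eval, ih, centralBinomRatio_succ, Nat.factorial_succ]
    push_cast
    field_simp
    ring

lemma hasSum_centralBinomRatio_mul_pow {x : ℝ} (hx : |x| < 1) :
    HasSum (fun k ↦ centralBinomRatio k * x ^ k) (1 / √(1 - x)) := by
  have mem_ball : x ∈ Metric.eball 0 1 := by
    simpa [enorm_eq_nnnorm] using! hx
  have binomial_series :=
    (one_div_one_sub_rpow_hasFPowerSeriesOnBall_zero (1 / 2)).hasSum mem_ball
  simpa [← Ring.multichoose_eq, ← multichoose_one_half, sqrt_eq_rpow, mul_comm]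
    using binomial_series

lemma hasSum_centralBinomRatio_mul_sq_pow {x : ℝ} (hx : |x| < 1) :
    HasSum (fun k ↦ centralBinomRatio k * (x ^ 2) ^ k) (1 / √(1 - x ^ 2)) :=
  hasSum_centralBinomRatio_mul_pow (by rwa [abs_sq, sq_lt_one_iff_abs_lt_one])

lemma hasDerivAt_div_mul_pow_two_mul_add_one (c : ℝ) (k : ℕ) (x : ℝ) :
    HasDerivAt (fun y ↦ c / (2 * k + 1) * y ^ (2 * k + 1)) (c * (x ^ 2) ^ k) x := by
  refine ((hasDerivAt_pow (2 * k + 1) x).const_mul _).congr_deriv ?_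
  rw [Nat.add_sub_cancel, pow_mul]
  push_cast
  field_simp

lemma hasDerivAt_tsum_centralBinomRatio {x : ℝ} (hx : |x| < 1) :
    HasDerivAt (fun y : ℝ ↦ ∑' k : ℕ, centralBinomRatio k / (2 * k + 1) * y ^ (2 * k + 1))
      (1 / √(1 - x ^ 2)) x := by
  obtain ⟨r, hxr, hr⟩ := exists_between hx
  have r_nonneg : 0 ≤ r := (abs_nonneg x).trans hxr.le
  have bound_summable : Summable fun k ↦ centralBinomRatio k * (r ^ 2) ^ k :=
    (hasSum_centralBinomRatio_mul_sq_pow (by rwa [abs_of_nonneg r_nonneg])).summable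
  have deriv_le (k : ℕ) (y : ℝ) (hy : y ∈ Ioo (-r) r) :
      ‖centralBinomRatio k * (y ^ 2) ^ k‖ ≤ centralBinomRatio k * (r ^ 2) ^ k := by
    have := (centralBinomRatio_pos k).le
    rw [Real.norm_of_nonneg (by positivity)]
    gcongr ?_ * ?_ ^ k
    exact sq_le_sq' hy.1.le hy.2.le
  have hasDerivAt_tsum := hasDerivAt_tsum_of_isPreconnected bound_summable isOpen_Ioo
    isPreconnected_Ioo (fun k y _ ↦ hasDerivAt_div_mul_pow_two_mul_add_one _ k y) deriv_le
    (y₀ := 0) (by simpa using (abs_nonneg x).trans_lt hxr) (by simp) (abs_lt.mp hxr)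
  rwa [(hasSum_centralBinomRatio_mul_sq_pow hx).tsum_eq] at hasDerivAt_tsum

lemma norm_centralBinomRatio_div_mul_pow_le (k : ℕ) {x : ℝ} (hx : x ∈ Icc (-1) 1) :
    ‖centralBinomRatio k / (2 * k + 1) * x ^ (2 * k + 1)‖ ≤ centralBinomRatio k / (2 * k + 1) := by
  have coeff_nonneg : 0 ≤ centralBinomRatio k / (2 * k + 1) :=
    div_nonneg (centralBinomRatio_pos k).le (by positivity)
  rw [norm_mul, norm_pow, Real.norm_of_nonneg coeff_nonneg]
  exact mul_le_of_le_one_right coeff_nonneg (pow_le_one₀ (norm_nonneg x) (abs_le.mpr hx))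

lemma eqOn_tsum_arcsin :
    EqOn (fun x : ℝ ↦ ∑' k : ℕ, centralBinomRatio k / (2 * k + 1) * x ^ (2 * k + 1)) arcsin
      (Icc (-1) 1) := by
  have hasDerivAt_arcsin_of_mem {x : ℝ} (hx : x ∈ Ioo (-1) 1) :
      HasDerivAt arcsin (1 / √(1 - x ^ 2)) x :=
    hasDerivAt_arcsin hx.1.ne' hx.2.ne
  have hasDerivAt_series_of_mem {x : ℝ} (hx : x ∈ Ioo (-1) 1) :=
    hasDerivAt_tsum_centralBinomRatio (abs_lt.mpr hx)
  have eqOn_interior : EqOn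
      (fun x : ℝ ↦ ∑' k : ℕ, centralBinomRatio k / (2 * k + 1) * x ^ (2 * k + 1)) arcsin
      (Ioo (-1) 1) :=
    isOpen_Ioo.eqOn_of_deriv_eq isPreconnected_Ioo
      (fun x hx ↦ (hasDerivAt_series_of_mem hx).differentiableAt.differentiableWithinAt)
      (fun x hx ↦ (hasDerivAt_arcsin_of_mem hx).differentiableAt.differentiableWithinAt)
      (fun x hx ↦
        (hasDerivAt_series_of_mem hx).deriv.trans (hasDerivAt_arcsin_of_mem hx).deriv.symm)
      (x := 0) (by simp) (by simp)
  have continuousOn_series := continuousOn_tsum (fun k ↦ by fun_prop)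
    summable_centralBinomRatio_div_two_mul_add_one
    fun k x hx ↦ norm_centralBinomRatio_div_mul_pow_le k hx
  exact eqOn_interior.of_subset_closure continuousOn_series continuous_arcsin.continuousOn
    Ioo_subset_Icc_self (closure_Ioo (by norm_num)).ge

theorem hasSum_arcsin {x : ℝ} (hx : x ∈ Icc (-1) 1) :
    HasSum (fun k : ℕ ↦ centralBinomRatio k / (2 * k + 1) * x ^ (2 * k + 1)) (arcsin x) := by
  have summable := summable_centralBinomRatio_div_two_mul_add_one.of_norm_bounded
    fun k ↦ norm_centralBinomRatio_div_mul_pow_le k hx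
  exact eqOn_tsum_arcsin hx ▸ summable.hasSum

lemma choose_div_eq_centralBinomRatio_sub (k : ℕ) :
    ((2 * k).choose k : ℝ) / (2 * 4 ^ k * (k + 1) * (2 * k + 1)) =
      centralBinomRatio k / (2 * k + 1) - centralBinomRatio k / (2 * k + 2) := by
  rw [centralBinomRatio, Nat.centralBinom_eq_two_mul_choose]
  field_simp
  ring

/-- The series ∑_{k≥0} C(2k, k) / (2 · 4ᵏ · (k+1) · (2k+1)) converges with sum π/2 − 1. -/
theorem central_binom_series_pi_div_two_sub_one :
    Summable (fun k : ℕ => ((2 * k).choose k : ℝ) / (2 * 4 ^ k * (k + 1) * (2 * k + 1))) ∧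
    ∑' k : ℕ, ((2 * k).choose k : ℝ) / (2 * 4 ^ k * (k + 1) * (2 * k + 1)) = π / 2 - 1 := by
  have arcsin_one_series : HasSum (fun k : ℕ ↦ centralBinomRatio k / (2 * k + 1)) (π / 2) := by
    simpa using hasSum_arcsin (x := 1) (by simp)
  have series := arcsin_one_series.sub hasSum_centralBinomRatio_div_two_mul_add_two
  simp only [← choose_div_eq_centralBinomRatio_sub] at series
  exact ⟨series.summable, series.tsum_eq⟩
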